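/- arXiv:2211.00766 — 2 statements merged into one kernel-verified Lean document; each statement's English description precedes it below -/
import Mathlib

section
/- For every positive integer k, every finite family P_1, …, P_k of nonzero good polynomials in one variable, and every finite coloring of T, there exist x, y ∈ T such that the k+2 elements x, x + P_1(y), x + P_2(y), …, x + P_k(y), and x·y all receive the same color. -/
/-- `InT p` means `p` is a nonzero good polynomial in one variable, i.e. an element
of the semiring `T`: nonzero, with nonnegative integer coefficients (automatic over `ℕ`)
and zero constant term. -/
def InT (p : Polynomial ℕ) : Prop := p ≠ 0 ∧ p.coeff 0 = 0

/-!
The additive input is the polynomial van der Waerden theorem, proved over commutative rings by PET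
induction and color focusing, carried over to commutative semirings by lifting colorings to
polynomial semirings (which embed in rings), and applied to the semiring `R[X]`, so that the point
and the difference it yields are themselves polynomials `a` and `h`. By compactness finitely many
pairs `(a, h)` serve all colorings, so the pair may be chosen after a value of `X` is fixed.

The multiplicative part is a color focusing argument for a pair `(x, v)`, where a factorization
`x = z w`, `v = z u` gives access to colors of elements `w + u g(v, z)`. Replacing `x` by
`x' = v (x + v a(v))` and `v` by `v² h(v)`, van der Waerden's theorem makes the color of `x'`
accessible. Since `x' = (w + u a(v)) · v z`, if this color was accessible before, then
`w + u a(v)` and `v z` are as required; otherwise one more color is accessible than before, which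
can happen only finitely often.
-/

open Polynomial
open scoped Polynomial.Bivariate

theorem exists_finset_forall_exists_of_dependsOn {α ι κ : Type*} [Finite κ]
    {Q : ι → (α → κ) → Prop} (hQ : ∀ i, ∃ s : Finset α, DependsOn (Q i) s)
    (h : ∀ c, ∃ i, Q i c) : ∃ t : Finset ι, ∀ c, ∃ i ∈ t, Q i c := by
  let _ : TopologicalSpace κ := ⊥
  have _ : DiscreteTopology κ := ⟨rfl⟩
  have isOpen_setOf (i : ι) : IsOpen {c | Q i c} := by
    obtain ⟨s, hs⟩ := hQ i
    refine isOpen_pi_iff.2 fun c hc ↦ ⟨s, fun a ↦ {c a}, by simp, fun c' hc' ↦ ?_⟩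
    exact (hs hc').mpr hc
  obtain ⟨t, ht⟩ := isCompact_univ.elim_finite_subcover _ isOpen_setOf
    fun c _ ↦ Set.mem_iUnion.2 (h c)
  exact ⟨t, fun c ↦ by simpa using ht (Set.mem_univ c)⟩

section MonochromaticShifts

variable {R S κ : Type*} [CommSemiring R] [CommSemiring S] {D : Set R} {A : Finset R[X]}

/-- The conclusion of the polynomial van der Waerden theorem for the finite family of polynomials
`A`, with differences in `D`: every finite coloring of `R` has a point `a` and a `d ∈ D` such that
all `a + p(d)`, `p ∈ A`, have the color of `a`. -/
def HasMonochromaticShifts (D : Set R) (A : Finset R[X]) : Prop :=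
  ∀ (n : ℕ) (c : R → Fin n), ∃ a, ∃ d ∈ D, ∀ p ∈ A, c (a + p.eval d) = c a

theorem HasMonochromaticShifts.exists_of_finite (h : HasMonochromaticShifts D A) [Finite κ]
    (c : R → κ) : ∃ a, ∃ d ∈ D, ∀ p ∈ A, c (a + p.eval d) = c a := by
  obtain ⟨n, ⟨e⟩⟩ := Finite.exists_equiv_fin κ
  simpa using h n (e ∘ c)

theorem HasMonochromaticShifts.exists_finset (h : HasMonochromaticShifts D A) (κ : Type*)
    [Finite κ] : ∃ s : Finset (R × D), ∀ c : R → κ, ∃ i ∈ s, ∀ p ∈ A,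
      c (i.1 + p.eval ↑i.2) = c i.1 := by
  classical
  refine exists_finset_forall_exists_of_dependsOn (fun i ↦ ?_) fun c ↦ ?_
  · refine ⟨insert i.1 (A.image fun p ↦ i.1 + p.eval ↑i.2), fun c c' hc ↦ ?_⟩
    simp only [Finset.coe_insert, Finset.coe_image, Set.forall_mem_insert,
      Set.forall_mem_image] at hc
    exact propext (forall₂_congr fun p hp ↦ by rw [hc.1, hc.2 hp])
  · obtain ⟨a, d, hd, hc⟩ := h.exists_of_finite c
    exact ⟨(a, ⟨d, hd⟩), hc⟩

open scoped Classical in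
theorem HasMonochromaticShifts.of_erase_zero (h : HasMonochromaticShifts D (A.erase 0)) :
    HasMonochromaticShifts D A := by
  intro n c
  obtain ⟨a, d, hd, hc⟩ := h n c
  refine ⟨a, d, hd, fun p hp ↦ ?_⟩
  by_cases hp0 : p = 0
  · simp [hp0]
  · exact hc p (Finset.mem_erase.2 ⟨hp0, hp⟩)

open scoped Classical in
theorem HasMonochromaticShifts.image_map {f : R →+* S} {D : Set S}
    (h : HasMonochromaticShifts (f ⁻¹' D) A) : HasMonochromaticShifts D (A.image (map f)) := by
  intro n c
  obtain ⟨a, d, hd, hc⟩ := h n (c ∘ f)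
  refine ⟨f a, f d, hd, Finset.forall_mem_image.2 fun p hp ↦ ?_⟩
  simpa [eval_map_apply] using hc p hp

theorem exists_forall_mem_add_mem_range {M N : Type*} [AddCommMonoid M] [AddCommMonoid N]
    (f : M →+ N) (hf : ∀ n, ∃ m, n + f m ∈ Set.range f) (s : Finset N) :
    ∃ m, ∀ n ∈ s, n + f m ∈ Set.range f := by
  classical
  choose g b hb using hf
  refine ⟨∑ n ∈ s, g n, fun n hn ↦ ⟨b n + ∑ k ∈ s.erase n, g k, ?_⟩⟩
  rw [map_add, hb, ← Finset.add_sum_erase s g hn, map_add, add_assoc]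

open scoped Classical in
theorem HasMonochromaticShifts.of_image_map {f : R →+* S} (hf : Function.Injective f)
    (hsub : ∀ b, ∃ a, b + f a ∈ Set.range f)
    (h : HasMonochromaticShifts (f '' D) (A.image (map f))) : HasMonochromaticShifts D A := by
  intro n c
  obtain ⟨s, hs⟩ := h.exists_finset (Fin n)
  obtain ⟨v, hv⟩ := exists_forall_mem_add_mem_range f.toAddMonoidHom hsub (s.image Prod.fst)
  obtain ⟨⟨b, _, d, hd, rfl⟩, hi, hmono⟩ := hs fun b ↦ c (Function.invFun f (b + f v))
  obtain ⟨a, ha : f a = b + f v⟩ := hv b (Finset.mem_image_of_mem _ hi)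
  refine ⟨a, d, hd, fun p hp ↦ ?_⟩
  have hp' := hmono _ (Finset.mem_image_of_mem (map f) hp)
  simpa only [eval_map_apply, add_right_comm b, ← ha, ← map_add,
    Function.leftInverse_invFun hf _] using hp'

end MonochromaticShifts

section ColorFocusing

variable {R κ : Type*} [CommRing R] {A : Finset R[X]}

/-- The colors on which `a` is focused: those `s` such that, for some `d ∈ E`, all `a + p(d)`,
`p ∈ A`, have color `s`. -/
def focusedColors (A : Finset R[X]) (c : R → κ) (a : R) (E : Finset R) : Set κ :=
  {s | ∃ d ∈ E, ∀ p ∈ A, c (a + p.eval d) = s}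

theorem focusedColors_comp_add_left (A : Finset R[X]) (c : R → κ) (x a : R) (E : Finset R) :
    focusedColors A (fun y ↦ c (x + y)) a E = focusedColors A c (x + a) E := by
  simp only [focusedColors, add_assoc]

open scoped Classical in
/-- The points whose colors decide whether the color of `a` is one of the
`focusedColors A c a E`. -/
noncomputable def shiftPoints (A : Finset R[X]) (a : R) (E : Finset R) : Finset R :=
  insert a (Finset.image₂ (fun p d ↦ a + p.eval d) A E)

theorem self_mem_shiftPoints (A : Finset R[X]) (a : R) (E : Finset R) : a ∈ shiftPoints A a E := by
  classical exact Finset.mem_insert_self _ _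

theorem add_eval_mem_shiftPoints {p : R[X]} (hp : p ∈ A) (a : R) {d : R} {E : Finset R}
    (hd : d ∈ E) : a + p.eval d ∈ shiftPoints A a E := by
  classical exact Finset.mem_insert_of_mem (Finset.mem_image₂_of_mem hp hd)

theorem focusedColors_congr {a : R} {E : Finset R} {c c' : R → κ}
    (h : ∀ b ∈ shiftPoints A a E, c b = c' b) : focusedColors A c a E = focusedColors A c' a E := by
  ext s
  refine exists_congr fun d ↦ and_congr_right fun hd ↦ forall₂_congr fun p hp ↦ ?_
  rw [h _ (add_eval_mem_shiftPoints hp a hd)]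

/-- The polynomial `p(X + e) - p(e) - q(X)`, by which the inductive step of PET induction
replaces `p`. The term `p(e)` makes the constant coefficient vanish. -/
noncomputable def shiftSub (q p : R[X]) (e : R) : R[X] :=
  taylor e p - C (p.eval e) - q

theorem eval_shiftSub (q p : R[X]) (e d : R) :
    (shiftSub q p e).eval d = p.eval (d + e) - p.eval e - q.eval d := by
  simp [shiftSub, taylor_eval]

open scoped Classical in
/-- The family to which the polynomial van der Waerden theorem for `A` is reduced in the inductive
step of its proof, where `E` holds the differences produced by the color focusing so far. -/
noncomputable def shiftFamily (q : R[X]) (A : Finset R[X]) (E : Finset R) : Finset R[X] :=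
  Finset.image₂ (shiftSub q) A (insert 0 E)

theorem shiftSub_zero_mem_shiftFamily (q : R[X]) {p : R[X]} (hp : p ∈ A) (E : Finset R) :
    shiftSub q p 0 ∈ shiftFamily q A E := by
  classical exact Finset.mem_image₂_of_mem hp (Finset.mem_insert_self _ _)

theorem shiftSub_mem_shiftFamily (q : R[X]) {p : R[X]} (hp : p ∈ A) {e : R} {E : Finset R}
    (he : e ∈ E) : shiftSub q p e ∈ shiftFamily q A E := by
  classical exact Finset.mem_image₂_of_mem hp (Finset.mem_insert_of_mem he)

theorem shiftFamily_mono_right (q : R[X]) (A : Finset R[X]) {E E' : Finset R} (h : E ⊆ E') :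
    shiftFamily q A E ⊆ shiftFamily q A E' := by
  classical exact Finset.image₂_subset_left (Finset.insert_subset_insert 0 h)

theorem coeff_zero_of_mem_shiftFamily {q : R[X]} (hq : q.coeff 0 = 0) {E : Finset R} {r : R[X]}
    (hr : r ∈ shiftFamily q A E) : r.coeff 0 = 0 := by
  classical
  obtain ⟨p, -, e, -, rfl⟩ := Finset.mem_image₂.1 hr
  simp [shiftSub, hq, taylor_coeff_zero]

open scoped Classical in
theorem insert_focusedColors_subset (hA : ∀ p ∈ A, p.coeff 0 = 0) {q : R[X]} {c : R → κ}
    {x a d : R} {E : Finset R}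
    (h : ∀ b ∈ shiftPoints A a E, ∀ r ∈ shiftFamily q A E, c (x + r.eval d + b) = c (x + b)) :
    insert (c (x + a)) (focusedColors A c (x + a) E) ⊆
      focusedColors A c (x + a - q.eval d) (insert d (E.image (d + ·))) := by
  refine Set.insert_subset ⟨d, Finset.mem_insert_self _ _, fun p hp ↦ ?_⟩ ?_
  · rw [← h a (self_mem_shiftPoints A a E) _ (shiftSub_zero_mem_shiftFamily q hp E),
      eval_shiftSub, ← coeff_zero_eq_eval_zero, hA p hp]
    ring_nf
  · rintro s ⟨e, he, hs⟩
    refine ⟨d + e, Finset.mem_insert_of_mem (Finset.mem_image_of_mem _ he), fun p hp ↦ ?_⟩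
    rw [← hs p hp, add_assoc x, ← h _ (add_eval_mem_shiftPoints hp a he) _
      (shiftSub_mem_shiftFamily q hp he), eval_shiftSub]
    ring_nf

theorem exists_finset_focusedColors [Finite κ] {D : Set R} {m : ℕ}
    (h : ∀ c : R → κ, ∃ a, ∃ E : Finset R, ↑E ⊆ D ∧
      (c a ∈ focusedColors A c a E ∨ m ≤ (focusedColors A c a E).ncard)) :
    ∃ s : Finset (R × Finset R), ∀ c : R → κ, ∃ i ∈ s, ↑i.2 ⊆ D ∧
      (c i.1 ∈ focusedColors A c i.1 i.2 ∨ m ≤ (focusedColors A c i.1 i.2).ncard) := by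
  refine exists_finset_forall_exists_of_dependsOn
    (fun i ↦ ⟨shiftPoints A i.1 i.2, fun c c' hc ↦ ?_⟩) (fun c ↦ by simpa using h c)
  simp only [focusedColors_congr hc, hc i.1 (self_mem_shiftPoints A i.1 i.2)]

theorem exists_mem_or_le_ncard_focusedColors {D : AddSubsemigroup R}
    (hA : ∀ p ∈ A, p.coeff 0 = 0) {q : R[X]}
    (hshift : ∀ E, HasMonochromaticShifts (D : Set R) (shiftFamily q A E)) [Finite κ] (m : ℕ)
    (c : R → κ) : ∃ a, ∃ E : Finset R, ↑E ⊆ (D : Set R) ∧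
      (c a ∈ focusedColors A c a E ∨ m ≤ (focusedColors A c a E).ncard) := by
  classical
  induction m generalizing c with
  | zero => exact ⟨0, ∅, by simp⟩
  | succ m ih =>
    obtain ⟨s, hs⟩ := exists_finset_focusedColors ih
    obtain ⟨x, d, hd, hx⟩ := (hshift (s.biUnion Prod.snd)).exists_of_finite
      fun x (b : s.biUnion fun i ↦ shiftPoints A i.1 i.2) ↦ c (x + b)
    obtain ⟨⟨a, E⟩, hi, hE, hfocus⟩ := hs fun y ↦ c (x + y)
    rw [focusedColors_comp_add_left] at hfocus
    by_cases hmem : c (x + a) ∈ focusedColors A c (x + a) E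
    · exact ⟨x + a, E, hE, .inl hmem⟩
    have hxE : ∀ b ∈ shiftPoints A a E, ∀ r ∈ shiftFamily q A E,
        c (x + r.eval d + b) = c (x + b) := fun b hb r hr ↦
      congrFun (hx r (shiftFamily_mono_right q A (Finset.subset_biUnion_of_mem Prod.snd hi) hr))
        ⟨b, Finset.mem_biUnion.2 ⟨_, hi, hb⟩⟩
    refine ⟨x + a - q.eval d, insert d (E.image (d + ·)), ?_, .inr ?_⟩
    · simp only [Finset.coe_insert, Finset.coe_image]
      exact Set.insert_subset hd (Set.image_subset_iff.2 fun e he ↦ add_mem hd (hE he))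
    · calc m + 1 ≤ (focusedColors A c (x + a) E).ncard + 1 := by
            gcongr; exact hfocus.resolve_left hmem
        _ = (insert (c (x + a)) (focusedColors A c (x + a) E)).ncard :=
            (Set.ncard_insert_of_notMem hmem).symm
        _ ≤ _ := Set.ncard_le_ncard (insert_focusedColors_subset hA hxE)

theorem hasMonochromaticShifts_of_shiftFamily {D : AddSubsemigroup R}
    (hA : ∀ p ∈ A, p.coeff 0 = 0) {q : R[X]}
    (hshift : ∀ E, HasMonochromaticShifts (D : Set R) (shiftFamily q A E)) :
    HasMonochromaticShifts (D : Set R) A := by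
  intro n c
  obtain ⟨a, E, hE, ⟨d, hd, h⟩ | hcard⟩ :=
    exists_mem_or_le_ncard_focusedColors hA hshift (n + 1) c
  · exact ⟨a, d, hE hd, h⟩
  · have := (Set.ncard_le_card (focusedColors A c a E)).trans_eq (Nat.card_fin n)
    omega

end ColorFocusing

section PETInduction

variable {R : Type*} [CommRing R] {A B E : Finset R[X]} {p q : R[X]} {n : ℕ}

open scoped Classical in
/-- The leading coefficients of the members of `A` of degree `n`. -/
noncomputable def leadingCoeffs (A : Finset R[X]) (n : ℕ) : Finset R :=
  {p ∈ A | p.natDegree = n}.image leadingCoeff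

theorem mem_leadingCoeffs {x : R} :
    x ∈ leadingCoeffs A n ↔ ∃ p ∈ A, p.natDegree = n ∧ p.leadingCoeff = x := by
  simp [leadingCoeffs, and_assoc]

theorem leadingCoeffs_mono (h : A ⊆ B) (n : ℕ) : leadingCoeffs A n ⊆ leadingCoeffs B n := by
  classical exact Finset.image_subset_image (Finset.filter_subset_filter _ h)

theorem zero_notMem_leadingCoeffs (hn : n ≠ 0) : (0 : R) ∉ leadingCoeffs A n := by
  rw [mem_leadingCoeffs]
  rintro ⟨p, -, rfl, hp⟩
  exact hn (by simp [leadingCoeff_eq_zero.1 hp])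

open scoped Classical in
/-- Bergelson's weight of the family `A`: the number of leading coefficients that occur in each
degree. `Colex` compares two weights at the largest degree in which they differ. -/
noncomputable def petWeight (A : Finset R[X]) : Colex (ℕ →₀ ℕ) :=
  toColex <| .onFinset (A.image natDegree) (fun n ↦ (leadingCoeffs A n).card) fun n hn ↦ by
    obtain ⟨x, hx⟩ := Finset.card_ne_zero.1 hn
    obtain ⟨p, hp, rfl, -⟩ := mem_leadingCoeffs.1 hx
    exact Finset.mem_image_of_mem _ hp

theorem petWeight_mono (h : A ⊆ B) : petWeight A ≤ petWeight B :=
  Finsupp.toColex_monotone fun n ↦ Finset.card_le_card (leadingCoeffs_mono h n)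

theorem petWeight_lt (n : ℕ) (hgt : ∀ j, n < j → leadingCoeffs A j = leadingCoeffs B j)
    (hn : (leadingCoeffs A n).card < (leadingCoeffs B n).card) : petWeight A < petWeight B :=
  Finsupp.Colex.lt_iff.2 ⟨n, fun j hj ↦ congrArg Finset.card (hgt j hj), hn⟩

theorem natDegree_shiftSub_le (h : q.natDegree ≤ p.natDegree) (e : R) :
    (shiftSub q p e).natDegree ≤ p.natDegree :=
  (natDegree_sub_le _ _).trans <| max_le ((natDegree_sub_le _ _).trans (by simp)) h

theorem coeff_shiftSub (q : R[X]) (hp : p.natDegree ≠ 0) (e : R) :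
    (shiftSub q p e).coeff p.natDegree = p.leadingCoeff - q.coeff p.natDegree := by
  simp [shiftSub, coeff_C, hp]

theorem coeff_shiftSub_of_lt (h : q.natDegree < p.natDegree) (e : R) :
    (shiftSub q p e).coeff p.natDegree = p.leadingCoeff := by
  rw [coeff_shiftSub q h.ne_bot, coeff_eq_zero_of_natDegree_lt h, sub_zero]

theorem natDegree_shiftSub (h : q.natDegree < p.natDegree) (e : R) :
    (shiftSub q p e).natDegree = p.natDegree := by
  refine (natDegree_shiftSub_le h.le e).antisymm (le_natDegree_of_ne_zero ?_)
  rw [coeff_shiftSub_of_lt h, leadingCoeff_ne_zero]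
  exact ne_zero_of_natDegree_gt h

theorem leadingCoeff_shiftSub (h : q.natDegree < p.natDegree) (e : R) :
    (shiftSub q p e).leadingCoeff = p.leadingCoeff := by
  rw [leadingCoeff, natDegree_shiftSub h, coeff_shiftSub_of_lt h]

theorem leadingCoeffs_shiftFamily_of_lt (hq : ∀ p ∈ A, q.natDegree ≤ p.natDegree) (E : Finset R)
    (hn : q.natDegree < n) : leadingCoeffs (shiftFamily q A E) n = leadingCoeffs A n := by
  classical
  ext x
  simp only [mem_leadingCoeffs]
  constructor
  · rintro ⟨r, hr, rfl, rfl⟩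
    obtain ⟨p, hp, e, -, rfl⟩ := Finset.mem_image₂.1 hr
    have hlt : q.natDegree < p.natDegree := hn.trans_le (natDegree_shiftSub_le (hq p hp) e)
    exact ⟨p, hp, (natDegree_shiftSub hlt e).symm, (leadingCoeff_shiftSub hlt e).symm⟩
  · rintro ⟨p, hp, rfl, rfl⟩
    exact ⟨_, shiftSub_zero_mem_shiftFamily q hp E, natDegree_shiftSub hn 0,
      leadingCoeff_shiftSub hn 0⟩

open scoped Classical in
theorem leadingCoeffs_shiftFamily_subset (hq : ∀ p ∈ A, q.natDegree ≤ p.natDegree)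
    (hq0 : q.natDegree ≠ 0) (E : Finset R) :
    leadingCoeffs (shiftFamily q A E) q.natDegree ⊆
      (leadingCoeffs A q.natDegree).image (· - q.leadingCoeff) := by
  intro x hx
  obtain ⟨r, hr, hdeg, rfl⟩ := mem_leadingCoeffs.1 hx
  obtain ⟨p, hp, e, -, rfl⟩ := Finset.mem_image₂.1 hr
  have hpq : p.natDegree = q.natDegree := by
    by_contra hne
    exact hne (hdeg ▸ (natDegree_shiftSub ((hq p hp).lt_of_ne' hne) e).symm)
  refine Finset.mem_image.2 ⟨p.leadingCoeff, mem_leadingCoeffs.2 ⟨p, hp, hpq, rfl⟩, ?_⟩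
  calc p.leadingCoeff - q.leadingCoeff
      = p.leadingCoeff - q.coeff p.natDegree := by rw [hpq, coeff_natDegree]
    _ = (shiftSub q p e).coeff p.natDegree := (coeff_shiftSub q (hpq ▸ hq0) e).symm
    _ = (shiftSub q p e).leadingCoeff := by rw [hpq, ← hdeg, coeff_natDegree]

theorem card_leadingCoeffs_shiftFamily_lt (hqA : q ∈ A) (hq : ∀ p ∈ A, q.natDegree ≤ p.natDegree)
    (hq0 : q.natDegree ≠ 0) (E : Finset R) :
    (leadingCoeffs (shiftFamily q A E) q.natDegree).card <
      (leadingCoeffs A q.natDegree).card := by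
  classical
  have hmem : (0 : R) ∈ (leadingCoeffs A q.natDegree).image (· - q.leadingCoeff) :=
    Finset.mem_image.2 ⟨_, mem_leadingCoeffs.2 ⟨q, hqA, rfl, rfl⟩, sub_self _⟩
  calc (leadingCoeffs (shiftFamily q A E) q.natDegree).card
      < ((leadingCoeffs A q.natDegree).image (· - q.leadingCoeff)).card :=
        Finset.card_lt_card <| Finset.ssubset_iff_of_subset
          (leadingCoeffs_shiftFamily_subset hq hq0 E) |>.2
          ⟨0, hmem, zero_notMem_leadingCoeffs hq0⟩
    _ ≤ (leadingCoeffs A q.natDegree).card := Finset.card_image_le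

theorem petWeight_shiftFamily_lt (hqA : q ∈ A) (hq : ∀ p ∈ A, q.natDegree ≤ p.natDegree)
    (hq0 : q.natDegree ≠ 0) (E : Finset R) : petWeight (shiftFamily q A E) < petWeight A :=
  petWeight_lt q.natDegree (fun _ ↦ leadingCoeffs_shiftFamily_of_lt hq E)
    (card_leadingCoeffs_shiftFamily_lt hqA hq hq0 E)

theorem hasMonochromaticShifts_of_commRing {D : AddSubsemigroup R} (hD : (D : Set R).Nonempty)
    (A : Finset R[X]) (hA : ∀ p ∈ A, p.coeff 0 = 0) : HasMonochromaticShifts (D : Set R) A := by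
  classical
  induction A using (InvImage.wf petWeight wellFounded_lt).induction with | _ A ih
  apply HasMonochromaticShifts.of_erase_zero
  have hA' : ∀ p ∈ A.erase 0, p.coeff 0 = 0 := fun p hp ↦ hA p (Finset.mem_of_mem_erase hp)
  obtain hempty | hne := (A.erase 0).eq_empty_or_nonempty
  · obtain ⟨d, hd⟩ := hD
    exact fun n c ↦ ⟨0, d, hd, by simp [hempty]⟩
  obtain ⟨q, hqA, hq⟩ := (A.erase 0).exists_min_image natDegree hne
  have hq0 : q.natDegree ≠ 0 := fun h ↦ Finset.ne_of_mem_erase hqA <| by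
    rw [eq_C_of_natDegree_eq_zero h, hA' q hqA, C_0]
  exact hasMonochromaticShifts_of_shiftFamily hA' fun E ↦ ih _
    ((petWeight_shiftFamily_lt hqA hq hq0 E).trans_le (petWeight_mono (A.erase_subset 0)))
    fun r ↦ coeff_zero_of_mem_shiftFamily (hA' q hqA)

end PETInduction

section Semiring

variable {R : Type*} [CommSemiring R]

theorem exists_add_map_mem_range_map (σ : Type*) (b : MvPolynomial σ ℤ) :
    ∃ a : MvPolynomial σ ℕ, b + MvPolynomial.map (Nat.castRingHom ℤ) a ∈
      Set.range (MvPolynomial.map (Nat.castRingHom ℤ)) := by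
  induction b using MvPolynomial.induction_on' with
  | monomial u k =>
    refine ⟨.monomial u (-k).toNat, .monomial u k.toNat, ?_⟩
    rw [MvPolynomial.map_monomial, MvPolynomial.map_monomial, ← map_add]
    congr 1
    simp only [eq_natCast]
    omega
  | add b b' ih ih' =>
    obtain ⟨a, r, hr⟩ := ih
    obtain ⟨a', r', hr'⟩ := ih'
    exact ⟨a + a', r + r', by rw [map_add, map_add, hr, hr', add_add_add_comm]⟩

theorem exists_image_map_eq {S : Type*} [CommSemiring S] [DecidableEq S[X]] {f : R →+* S}
    (hf : Function.Surjective f) {A : Finset S[X]} (hA : ∀ p ∈ A, p.coeff 0 = 0) :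
    ∃ B : Finset R[X], (∀ p ∈ B, p.coeff 0 = 0) ∧ B.image (map f) = A := by
  have hsub : (A : Set S[X]) ⊆ map f '' {p | p.coeff 0 = 0} := by
    intro p hp
    obtain ⟨r, hr⟩ := map_surjective f hf p.divX
    refine ⟨X * r, by simp, ?_⟩
    rw [Polynomial.map_mul, map_X, hr]
    nth_rw 2 [← X_mul_divX_add p]
    rw [hA p hp, C_0, add_zero]
  obtain ⟨B, hB, rfl⟩ := Finset.subset_set_image_iff.1 hsub
  exact ⟨B, hB, rfl⟩

theorem hasMonochromaticShifts_of_surjective_of_injective {R' S : Type*} [CommSemiring R']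
    [CommRing S] {π : R' →+* R} (hπ : Function.Surjective π) {ι : R' →+* S}
    (hι : Function.Injective ι) (hsub : ∀ b, ∃ a, b + ι a ∈ Set.range ι) {D : AddSubsemigroup R}
    (hD : (D : Set R).Nonempty) (A : Finset R[X]) (hA : ∀ p ∈ A, p.coeff 0 = 0) :
    HasMonochromaticShifts (D : Set R) A := by
  classical
  obtain ⟨B, hB, rfl⟩ := exists_image_map_eq hπ hA
  let D' : AddSubsemigroup S := (D.comap π.toAddMonoidHom.toAddHom).map ι.toAddMonoidHom.toAddHom
  have hD' : (D' : Set S).Nonempty := (hD.preimage hπ).image ι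
  have hB' : ∀ p ∈ B.image (map ι), p.coeff 0 = 0 :=
    Finset.forall_mem_image.2 fun p hp ↦ by rw [coeff_map, hB p hp, map_zero]
  exact .image_map (.of_image_map hι hsub (hasMonochromaticShifts_of_commRing hD' _ hB'))

theorem hasMonochromaticShifts {D : AddSubsemigroup R} (hD : (D : Set R).Nonempty)
    (A : Finset R[X]) (hA : ∀ p ∈ A, p.coeff 0 = 0) : HasMonochromaticShifts (D : Set R) A :=
  hasMonochromaticShifts_of_surjective_of_injective
    (π := MvPolynomial.eval₂Hom (Nat.castRingHom R) id) (fun r ↦ ⟨.X r, MvPolynomial.eval₂_X ..⟩)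
    (MvPolynomial.map_injective (Nat.castRingHom ℤ) Nat.cast_injective)
    (exists_add_map_mem_range_map R) hD A hA

end Semiring

section ColorChain

variable {R κ : Type*} [CommSemiring R] {T : Subsemigroup R} {P : Finset R[X]} {χ : R → κ}
  {G G' : Finset R[X][Y]} {a h : R[X]} {x v : R}

theorem sq_mul_mem {M : Type*} [Monoid M] {S : Subsemigroup M} {a b : M} (ha : a ∈ S)
    (hb : b ∈ S) : a ^ 2 * b ∈ S := by
  rw [pow_two]
  exact mul_mem (mul_mem ha ha) hb

theorem evalEval_aevalAeval (v z : R) (p q g : R[X][Y]) :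
    (aevalAeval p q g).evalEval v z = g.evalEval (p.evalEval v z) (q.evalEval v z) := by
  have h : (evalEvalRingHom v z).comp (aevalAeval p q : R[X][Y] →ₐ[R] R[X][Y]).toRingHom =
      evalEvalRingHom (p.evalEval v z) (q.evalEval v z) := by
    ext <;> simp
  exact DFunLike.congr_fun h g

theorem eval_eval (p : R[X][Y]) (h : R[X]) (v : R) :
    (p.eval h).eval v = p.evalEval v (h.eval v) := by
  rw [← coe_evalRingHom, ← eval₂_at_apply, eval₂_evalRingHom, coe_evalRingHom]

/-- The polynomial `Y · g(X² Y, 1)`, read as a polynomial in `Y` over `R[X]`: van der Waerden's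
theorem is applied to these shifts, as `v (v h(v) g(v² h(v), 1)) = v² h(v) g(v² h(v), 1)` is what
`mem_chainColors` adds for the new `v`. -/
noncomputable def shiftPoly (g : R[X][Y]) : R[X][Y] :=
  Y * aevalAeval (A := R[X][Y]) (C (X ^ 2) * Y) 1 g

theorem eval_eval_shiftPoly (g : R[X][Y]) (h : R[X]) (v : R) :
    ((shiftPoly g).eval h).eval v = h.eval v * g.evalEval (v ^ 2 * h.eval v) 1 := by
  rw [eval_eval, shiftPoly, evalEval_mul, evalEval_aevalAeval]
  simp only [evalEval_mul, evalEval_C, evalEval_X, evalEval_one, eval_pow, eval_X]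

theorem coeff_zero_shiftPoly (g : R[X][Y]) : (shiftPoly g).coeff 0 = 0 := by
  rw [shiftPoly, mul_coeff_zero, coeff_X_zero, zero_mul]

/-- The pattern `h(X) · g(X² h(X), X Y)`. It expresses the pattern `g` for the next pair
`(X² h(X), X Y)` in terms of the present pair `(X, Y)`. -/
noncomputable def prolongPoly (h : R[X]) (g : R[X][Y]) : R[X][Y] :=
  C h * aevalAeval (A := R[X][Y]) (C (X ^ 2 * h)) (Y * C X) g

theorem evalEval_prolongPoly (h : R[X]) (g : R[X][Y]) (v z : R) :
    (prolongPoly h g).evalEval v z =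
      h.eval v * g.evalEval (v ^ 2 * h.eval v) (z * v) := by
  simp only [prolongPoly, evalEval_mul, evalEval_aevalAeval, evalEval_C, evalEval_X, eval_mul,
    eval_pow, eval_X]

/-- The pattern `Y² p'(X Y)`, where `p = X p'`: if `v = z u`, then `p(v z)` is `u` times its value
at `(v, z)`. -/
noncomputable def productPoly (p : R[X]) : R[X][Y] :=
  Y ^ 2 * aeval (Y * C X) p.divX

theorem evalEval_productPoly (p : R[X]) (v z : R) :
    (productPoly p).evalEval v z = z ^ 2 * p.divX.eval (z * v) := by
  have h : (evalEvalRingHom v z).comp (aeval (Y * C X) : R[X] →ₐ[R] R[X][Y]).toRingHom =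
      evalRingHom (z * v) := by
    ext <;> simp
  rw [productPoly, evalEval_mul, evalEval_pow, evalEval_X]
  exact congrArg _ (DFunLike.congr_fun h p.divX)

/-- The colors accessible from the pair `(x, v)`: those `s` such that for some common factorization
`x = z w`, `v = z u`, all `w + u g(v, z)`, `g ∈ G`, have color `s`. The bivariate polynomials `g`
are evaluated at `X = v`, `Y = z`, and `v z` is required to lie in `T` instead of `z` to allow
`z = 1`. -/
def chainColors (T : Subsemigroup R) (χ : R → κ) (G : Finset R[X][Y]) (x v : R) : Set κ :=
  {s | ∃ z u w, v * z ∈ T ∧ u ∈ T ∧ w ∈ T ∧ x = z * w ∧ v = z * u ∧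
    ∀ g ∈ G, χ (w + u * g.evalEval v z) = s}

theorem chainColors_anti (h : G ⊆ G') : chainColors T χ G' x v ⊆ chainColors T χ G x v :=
  fun _ ⟨z, u, w, hz, hu, hw, hx, hv, hs⟩ ↦
    ⟨z, u, w, hz, hu, hw, hx, hv, fun g hg ↦ hs g (h hg)⟩

theorem mem_chainColors (hx : x ∈ T) (hv : v ∈ T)
    (h : ∀ g ∈ G, χ (x + v * g.evalEval v 1) = χ x) : χ x ∈ chainColors T χ G x v :=
  ⟨1, v, x, by rwa [mul_one], hv, hx, (one_mul x).symm, (one_mul v).symm, h⟩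

open scoped Classical in
/-- The patterns needed before the step from `(x, v)` to `(v (x + v a(v)), v² h(v))` in order to
have the patterns `G` after it, and to read off the shifts `P` when a color recurs. -/
noncomputable def extendPatterns (P : Finset R[X]) (G : Finset R[X][Y]) (a h : R[X]) :
    Finset R[X][Y] :=
  insert (C a) (P.image (C a + productPoly ·) ∪ G.image (C a + prolongPoly h ·))

theorem C_mem_extendPatterns : C a ∈ extendPatterns P G a h := by
  simp [extendPatterns]

theorem add_productPoly_mem_extendPatterns {p : R[X]} (hp : p ∈ P) :
    C a + productPoly p ∈ extendPatterns P G a h := by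
  classical simpa [extendPatterns] using .inr (.inl ⟨p, hp, rfl⟩)

theorem add_prolongPoly_mem_extendPatterns {g : R[X][Y]} (hg : g ∈ G) :
    C a + prolongPoly h g ∈ extendPatterns P G a h := by
  classical simpa [extendPatterns] using .inr (.inr ⟨g, hg, rfl⟩)

theorem chainColors_extendPatterns_subset (hT : ∀ x ∈ T, ∀ y ∈ T, ∀ r, x + y * r ∈ T)
    (hv : v ∈ T) (hh : h.eval v ∈ T) :
    chainColors T χ (extendPatterns P G a h) x v ⊆
      chainColors T χ G (v * (x + v * a.eval v)) (v ^ 2 * h.eval v) := by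
  rintro s ⟨z, u, w, hvz, hu, hw, rfl, hvu, hs⟩
  refine ⟨z * v, u * h.eval v, w + u * a.eval v, ?_, mul_mem hu hh, hT w hw u hu _, ?_, ?_,
    fun g hg ↦ ?_⟩
  · convert mul_mem (sq_mul_mem hv hh) hvz using 1
    ring
  · calc v * (z * w + v * a.eval v) = v * (z * w + z * u * a.eval v) := by rw [← hvu]
      _ = z * v * (w + u * a.eval v) := by ring
  · calc v ^ 2 * h.eval v = v * (z * u) * h.eval v := by rw [← hvu, pow_two]
      _ = z * v * (u * h.eval v) := by ring
  · rw [← hs _ (add_prolongPoly_mem_extendPatterns hg), evalEval_add, evalEval_C,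
      evalEval_prolongPoly]
    ring_nf

/-- There are `x, y ∈ T` such that `x`, `x y` and all `x + p(y)`, `p ∈ P`, have the same color. The
color focusing argument is by contradiction, and this is the property it negates. -/
def HasPattern (T : Subsemigroup R) (P : Finset R[X]) (χ : R → κ) : Prop :=
  ∃ x ∈ T, ∃ y ∈ T, (∀ p ∈ P, χ (x + p.eval y) = χ x) ∧ χ (x * y) = χ x

theorem HasPattern.of_mem_chainColors (hT : ∀ x ∈ T, ∀ y ∈ T, ∀ r, x + y * r ∈ T)
    (hP : ∀ p ∈ P, p.coeff 0 = 0)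
    (hmem : χ (v * (x + v * a.eval v)) ∈ chainColors T χ (extendPatterns P G a h) x v) :
    HasPattern T P χ := by
  obtain ⟨z, u, w, hvz, hu, hw, rfl, hvu, hs⟩ := hmem
  have hprod : (w + u * a.eval v) * (v * z) = v * (z * w + v * a.eval v) :=
    calc _ = v * (z * w + z * u * a.eval v) := by ring
      _ = _ := by rw [← hvu]
  have hbase := hs _ C_mem_extendPatterns
  rw [evalEval_C] at hbase
  refine ⟨w + u * a.eval v, hT w hw u hu _, v * z, hvz, fun p hp ↦ ?_, ?_⟩
  · have heval : p.eval (v * z) = u * (productPoly p).evalEval v z :=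
      calc p.eval (v * z) = v * z * p.divX.eval (z * v) := by
            nth_rw 1 [← X_mul_divX_add p]
            simp [hP p hp, mul_comm z v]
        _ = z * u * z * p.divX.eval (z * v) := by rw [← hvu]
        _ = u * (productPoly p).evalEval v z := by
            rw [evalEval_productPoly]
            ring
    rw [hbase, ← hs _ (add_productPoly_mem_extendPatterns hp), evalEval_add, evalEval_C, heval]
    ring_nf
  · rw [hbase, hprod]

/-- The polynomials that map `T` to itself, from which the differences in van der Waerden's theorem
for `R[X]` are taken. -/
def polysInto (T : Subsemigroup R) (hT : ∀ x ∈ T, ∀ y ∈ T, ∀ r, x + y * r ∈ T) :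
    AddSubsemigroup R[X] where
  carrier := {h | ∀ v ∈ T, h.eval v ∈ T}
  add_mem' hf hg v hv := by simpa using hT _ (hf v hv) _ (hg v hv) 1

theorem eval_mem_of_mem_polysInto {hT : ∀ x ∈ T, ∀ y ∈ T, ∀ r, x + y * r ∈ T}
    (hh : h ∈ polysInto T hT) (hv : v ∈ T) : h.eval v ∈ T :=
  hh v hv

theorem nonempty_polysInto (hT : ∀ x ∈ T, ∀ y ∈ T, ∀ r, x + y * r ∈ T) :
    (polysInto T hT : Set R[X]).Nonempty :=
  ⟨X, fun v hv ↦ by rwa [eval_X]⟩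

theorem exists_finset_extendPatterns [Finite κ] (hT : ∀ x ∈ T, ∀ y ∈ T, ∀ r, x + y * r ∈ T)
    (P : Finset R[X]) (χ : R → κ) (G : Finset R[X][Y]) :
    ∃ G' : Finset R[X][Y], ∀ x ∈ T, ∀ v ∈ T, ∃ a h : R[X],
      extendPatterns P G a h ⊆ G' ∧ h.eval v ∈ T ∧
        χ (v * (x + v * a.eval v)) ∈
          chainColors T χ G (v * (x + v * a.eval v)) (v ^ 2 * h.eval v) := by
  classical
  obtain ⟨S, hS⟩ := (hasMonochromaticShifts (nonempty_polysInto hT) (G.image shiftPoly) <|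
    Finset.forall_mem_image.2 fun g _ ↦ coeff_zero_shiftPoly g).exists_finset κ
  refine ⟨S.biUnion fun i ↦ extendPatterns P G i.1 i.2, fun x hx v hv ↦ ?_⟩
  obtain ⟨⟨a, h, hmem⟩, hi, hmono⟩ := hS fun f ↦ χ (v * (x + v * f.eval v))
  have hh : h.eval v ∈ T := eval_mem_of_mem_polysInto hmem hv
  refine ⟨a, h, fun g hg ↦ Finset.mem_biUnion.2 ⟨_, hi, hg⟩, hh,
    mem_chainColors (mul_mem hv (hT x hx v hv _)) (sq_mul_mem hv hh) fun g hg ↦ ?_⟩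
  rw [← hmono _ (Finset.mem_image_of_mem shiftPoly hg), eval_add, eval_eval_shiftPoly]
  ring_nf

theorem exists_le_ncard_chainColors [Finite κ] (hne : (T : Set R).Nonempty)
    (hT : ∀ x ∈ T, ∀ y ∈ T, ∀ r, x + y * r ∈ T) (hP : ∀ p ∈ P, p.coeff 0 = 0)
    (hχ : ¬HasPattern T P χ) (m : ℕ) (G : Finset R[X][Y]) :
    ∃ x ∈ T, ∃ v ∈ T, m ≤ (chainColors T χ G x v).ncard := by
  induction m generalizing G with
  | zero =>
    obtain ⟨t, ht⟩ := hne
    exact ⟨t, ht, t, ht, Nat.zero_le _⟩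
  | succ m ih =>
    obtain ⟨G', hG'⟩ := exists_finset_extendPatterns hT P χ G
    obtain ⟨x, hx, v, hv, hm⟩ := ih G'
    obtain ⟨a, h, hsub, hh, hmem⟩ := hG' x hx v hv
    have hanti := chainColors_anti (T := T) (χ := χ) (x := x) (v := v) hsub
    refine ⟨_, mul_mem hv (hT x hx v hv (a.eval v)), v ^ 2 * h.eval v,
      sq_mul_mem hv hh, ?_⟩
    have hnew : χ (v * (x + v * a.eval v)) ∉ chainColors T χ G' x v :=
      fun hold ↦ hχ (.of_mem_chainColors hT hP (hanti hold))
    calc m + 1 ≤ (chainColors T χ G' x v).ncard + 1 := by gcongr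
      _ = (insert (χ (v * (x + v * a.eval v))) (chainColors T χ G' x v)).ncard :=
        (Set.ncard_insert_of_notMem hnew).symm
      _ ≤ _ := Set.ncard_le_ncard <| Set.insert_subset hmem <|
        hanti.trans (chainColors_extendPatterns_subset hT hv hh)

theorem stmt0_general [Finite κ] (T : Subsemigroup R) (hne : (T : Set R).Nonempty)
    (hT : ∀ x ∈ T, ∀ y ∈ T, ∀ r, x + y * r ∈ T) (P : Finset R[X]) (hP : ∀ p ∈ P, p.coeff 0 = 0)
    (χ : R → κ) :
    ∃ x ∈ T, ∃ y ∈ T, (∀ p ∈ P, χ (x + p.eval y) = χ x) ∧ χ (x * y) = χ x := by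
  by_contra hχ
  obtain ⟨x, -, v, -, hcard⟩ := exists_le_ncard_chainColors hne hT hP hχ (Nat.card κ + 1) ∅
  have := Set.ncard_le_card (chainColors T χ ∅ x v)
  omega

end ColorChain

theorem InT.mul {p q : ℕ[X]} (hp : InT p) (hq : InT q) : InT (p * q) :=
  ⟨mul_ne_zero hp.1 hq.1, by rw [mul_coeff_zero, hp.2, zero_mul]⟩

theorem InT.add_mul {p q : ℕ[X]} (hp : InT p) (hq : InT q) (r : ℕ[X]) : InT (p + q * r) :=
  ⟨fun h ↦ hp.1 <| ext fun n ↦ by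
      have hn := congrArg (coeff · n) h
      simp only [coeff_add, coeff_zero] at hn ⊢
      omega,
    by rw [coeff_add, mul_coeff_zero, hp.2, hq.2, zero_mul, add_zero]⟩

/-- The multiplicative semigroup of the semiring `T`. -/
def goodPolynomials : Subsemigroup ℕ[X] where
  carrier := {p | InT p}
  mul_mem' := InT.mul

theorem stmt0 (k : ℕ) (hk : 0 < k) (P : Fin k → Polynomial ℕ)
    (hP : ∀ i, InT (P i)) (n : ℕ) (χ : Polynomial ℕ → Fin n) :
    ∃ x y : Polynomial ℕ, InT x ∧ InT y ∧
      (∀ i, χ (x + Polynomial.aeval y (P i)) = χ x) ∧ χ (x * y) = χ x := by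
  obtain ⟨x, hx, y, hy, hadd, hmul⟩ := stmt0_general goodPolynomials ⟨X, X_ne_zero, coeff_X_zero⟩
    (fun _ hx _ hy ↦ hx.add_mul hy) (Finset.univ.image fun i ↦ (P i).map (algebraMap ℕ ℕ[X]))
    (by simp [coeff_map, (hP _).2]) χ
  refine ⟨x, y, hx, hy, fun i ↦ ?_, hmul⟩
  rw [← eval_map_algebraMap]
  exact hadd _ (Finset.mem_image_of_mem _ (Finset.mem_univ i))
end

section
/- For every finite coloring of the positive integers there exist positive integers x and y such that x, x + y, and x·y all receive the same color. -/
/-! Call a set of colors `T` focused at `B` if every `t ∈ T` comes with a multiplier `p t ≠ 0` such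
that each `b ∈ B` is `x * p t` for some `x` of color `t`. By van der Waerden's theorem, a piecewise
syndetic `B` has a piecewise syndetic subset `D` and a `d > 0` with `b + d • (p t * p t) ∈ B` for
all `b ∈ D` and `t ∈ T`. Some color `t` is taken on a piecewise syndetic subset of `d • D`. If
`t ∈ T`, then `b = x * p t` and `b + d • (p t * p t) = (x + d • p t) * p t` show that `x` and
`x + d • p t` have color `t`, and so does `x * (d • p t) = d • b`. Otherwise `insert t T` is focused
at that subset, which can happen only finitely often. -/

open Combinatorics
open scoped Pointwise

/-- A subset of a commutative monoid is syndetic if finitely many of its translates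
`{n | n + k ∈ A}` cover the monoid. -/
def IsSyndetic {M : Type*} [AddCommMonoid M] (A : Set M) : Prop :=
  ∃ F : Finset M, ∀ n, ∃ k ∈ F, n + k ∈ A

/-- A subset of a commutative monoid is piecewise syndetic if the union of finitely many of its
translates `{n | n + k ∈ A}` is thick, that is, contains a translate of every finite set. -/
def IsPiecewiseSyndetic {M : Type*} [AddCommMonoid M] (A : Set M) : Prop :=
  ∃ F : Finset M, ∀ N : Finset M, ∃ a, ∀ n ∈ N, ∃ k ∈ F, a + n + k ∈ A

theorem isSyndetic_range_nsmul_nat {d : ℕ} (hd : d ≠ 0) :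
    IsSyndetic (Set.range fun n : ℕ ↦ d • n) := by
  refine ⟨Finset.range (d + 1), fun n ↦
    ⟨d - n % d, Finset.mem_range_succ_iff.2 (Nat.sub_le d _), n / d + 1, ?_⟩⟩
  have hdiv : d * (n / d) + n % d = n := Nat.div_add_mod n d
  have hmod : n % d < d := Nat.mod_lt n (Nat.pos_of_ne_zero hd)
  simp only [smul_eq_mul, mul_add_one]
  omega

theorem isPiecewiseSyndetic_compl_singleton_zero {M : Type*} [AddCommMonoid M] [Infinite M] :
    IsPiecewiseSyndetic ({0}ᶜ : Set M) := by
  refine ⟨{0}, fun N ↦ ?_⟩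
  have hfin : (⋃ n ∈ N, {a : M | a + n = 0}).Finite :=
    N.finite_toSet.biUnion fun n _ ↦ Set.Subsingleton.finite fun a ha b hb ↦
      left_neg_eq_right_neg ha ((add_comm n b).trans hb)
  obtain ⟨a, ha⟩ := hfin.exists_notMem
  simp only [Set.mem_iUnion, not_exists] at ha
  exact ⟨a, fun n hn ↦ ⟨0, Finset.mem_singleton_self 0, by simpa using ha n hn⟩⟩

namespace IsPiecewiseSyndetic

variable {M : Type*} [AddCommMonoid M] {A B : Set M}

theorem nonempty (hA : IsPiecewiseSyndetic A) : A.Nonempty := by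
  obtain ⟨F, hF⟩ := hA
  obtain ⟨a, ha⟩ := hF {0}
  obtain ⟨k, -, hk⟩ := ha 0 (Finset.mem_singleton_self 0)
  exact ⟨_, hk⟩

theorem of_union (h : IsPiecewiseSyndetic (A ∪ B)) :
    IsPiecewiseSyndetic A ∨ IsPiecewiseSyndetic B := by
  classical
  obtain ⟨F, hF⟩ := h
  refine or_iff_not_imp_left.2 fun hA ↦ ⟨F, fun N ↦ ?_⟩
  simp only [IsPiecewiseSyndetic, not_exists, not_forall, not_and] at hA
  obtain ⟨N', hN'⟩ := hA (N + F)
  obtain ⟨a, ha⟩ := hF (N' + N)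
  obtain ⟨n, hn, hgap⟩ := hN' a
  refine ⟨a + n, fun m hm ↦ ?_⟩
  obtain ⟨k, hk, hmem⟩ := ha (n + m) (Finset.add_mem_add hn hm)
  rw [← add_assoc] at hmem
  have hnotMem : a + n + m + k ∉ A := by
    simpa only [add_assoc] using hgap (m + k) (Finset.add_mem_add hm hk)
  exact ⟨k, hk, hmem.resolve_left hnotMem⟩

theorem exists_of_biUnion {ι : Type*} {s : Set ι} (hs : s.Finite) {f : ι → Set M}
    (h : IsPiecewiseSyndetic (⋃ i ∈ s, f i)) : ∃ i ∈ s, IsPiecewiseSyndetic (f i) := by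
  induction s, hs using Set.Finite.induction_on with
  | empty => simpa using h.nonempty
  | @insert i s _ _ ih =>
    rw [Set.biUnion_insert] at h
    rcases h.of_union with h | h
    · exact ⟨i, Set.mem_insert i s, h⟩
    · obtain ⟨j, hj, hfj⟩ := ih h
      exact ⟨j, Set.mem_insert_of_mem i hj, hfj⟩

theorem exists_inter_fiber {κ : Type*} [Finite κ] (hA : IsPiecewiseSyndetic A) (χ : M → κ) :
    ∃ t, IsPiecewiseSyndetic (A ∩ χ ⁻¹' {t}) := by
  have hcover : ⋃ t ∈ Set.univ, A ∩ χ ⁻¹' {t} = A := by ext; simp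
  obtain ⟨t, -, ht⟩ := exists_of_biUnion Set.finite_univ (hcover.symm ▸ hA)
  exact ⟨t, ht⟩

theorem image {M' : Type*} [AddCommMonoid M'] (hA : IsPiecewiseSyndetic A) {f : M →+ M'}
    (hf : IsSyndetic (Set.range f)) : IsPiecewiseSyndetic (f '' A) := by
  classical
  obtain ⟨F, hF⟩ := hA
  obtain ⟨G, hG⟩ := hf
  choose k hk r hr using hG
  refine ⟨G + F.image f, fun N ↦ ?_⟩
  obtain ⟨a, ha⟩ := hF (N.image r)
  refine ⟨f a, fun n hn ↦ ?_⟩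
  obtain ⟨j, hj, hmem⟩ := ha (r n) (Finset.mem_image_of_mem r hn)
  refine ⟨k n + f j, Finset.add_mem_add (hk n) (Finset.mem_image_of_mem f hj), _, hmem, ?_⟩
  rw [map_add, map_add, hr]
  abel

end IsPiecewiseSyndetic

theorem exists_sum_line_eq_nsmul_add {M ι : Type*} [AddCommMonoid M] [Fintype ι] {S : Set M}
    (l : Line S ι) : ∃ d > 0, ∃ b : M, ∀ x : S, ∑ i, (l x i : M) = d • (x : M) + b := by
  classical
  refine ⟨({i | l.idxFun i = none} : Finset ι).card, ?_,
    ∑ i, (l.idxFun i).elim 0 Subtype.val, fun x ↦ ?_⟩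
  · obtain ⟨i, hi⟩ := l.proper
    exact Finset.card_pos.2 ⟨i, by simpa using hi⟩
  · rw [← Finset.sum_const, Finset.sum_filter, ← Finset.sum_add_distrib]
    refine Finset.sum_congr rfl fun i _ ↦ ?_
    cases h : l.idxFun i <;> simp [h]

theorem exists_finset_mono_homothetic_copy {M : Type*} [AddCommMonoid M] (S : Finset M)
    (κ : Type*) [Finite κ] :
    ∃ (D : Finset ℕ) (B : Finset M), (∀ d ∈ D, 0 < d) ∧
      ∀ C : M → κ, ∃ d ∈ D, ∃ b ∈ B, ∃ c, ∀ s ∈ S, C (d • s + b) = c := by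
  classical
  obtain ⟨ι, _, hι⟩ := Line.exists_mono_in_high_dimension S κ
  have : Finite (Line S ι) := Finite.of_injective Line.idxFun fun _ _ h ↦ Line.ext h
  choose d hd b hsum using exists_sum_line_eq_nsmul_add (S := (S : Set M)) (ι := ι)
  refine ⟨(Set.finite_range d).toFinset, (Set.finite_range b).toFinset, by simpa using hd,
    fun C ↦ ?_⟩
  obtain ⟨l, c, hl⟩ := hι fun v ↦ C (∑ i, (v i : M))
  refine ⟨d l, by simp, b l, by simp, c, fun s hs ↦ ?_⟩
  simpa only [hsum l ⟨s, hs⟩] using hl ⟨s, hs⟩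

theorem IsPiecewiseSyndetic.exists_nsmul_add_mem {M : Type*} [AddCommMonoid M] {A : Set M}
    (hA : IsPiecewiseSyndetic A) (S : Finset M) :
    ∃ d > 0, IsPiecewiseSyndetic {b ∈ A | ∀ s ∈ S, b + d • s ∈ A} := by
  classical
  obtain ⟨F, hF⟩ := hA
  set S₀ := insert 0 S
  obtain ⟨D, B, hD, hmono⟩ := exists_finset_mono_homothetic_copy S₀ (Set F)
  suffices h : IsPiecewiseSyndetic
      (⋃ d ∈ (D : Set ℕ), {b ∈ A | ∀ s ∈ S, b + d • s ∈ A}) by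
    obtain ⟨d, hd, hps⟩ := exists_of_biUnion D.finite_toSet h
    exact ⟨d, hD d hd, hps⟩
  refine ⟨B + F, fun N ↦ ?_⟩
  obtain ⟨a, ha⟩ := hF (N + (D • S₀ + B))
  refine ⟨a, fun n hn ↦ ?_⟩
  -- Coloring `j` by all `k` with `a + (n + j) + k ∈ A` makes a single `k` work on a
  -- monochromatic copy.
  obtain ⟨d, hd, b, hb, K, hK⟩ := hmono fun j ↦ {k : F | a + (n + j) + k ∈ A}
  have hS₀ : 0 ∈ S₀ := Finset.mem_insert_self 0 S
  obtain ⟨k, hk, hk₀⟩ := ha (n + (d • 0 + b)) <| Finset.add_mem_add hn <|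
    Finset.add_mem_add (Finset.smul_mem_smul hd hS₀) hb
  have hkK : ⟨k, hk⟩ ∈ K := by rw [← hK 0 hS₀]; exact hk₀
  have hcopy (s : M) (hs : s ∈ S₀) : a + n + (b + k) + d • s ∈ A := by
    have hmem : a + (n + (d • s + b)) + k ∈ A := by rw [← hK s hs] at hkK; exact hkK
    convert hmem using 1
    abel
  refine ⟨b + k, Finset.add_mem_add hb hk, Set.mem_biUnion hd ⟨?_, fun s hs ↦ ?_⟩⟩
  · simpa using hcopy 0 hS₀
  · exact hcopy s (Finset.mem_insert_of_mem hs)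

/-- The colors in `T` are focused at `B` if, for each `t ∈ T`, the set `B` consists of right
multiples of elements of color `t` by one common nonzero `p`. This is the invariant of the color
focusing argument. -/
def IsFocused {R κ : Type*} [NonAssocSemiring R] (χ : R → κ) (T : Set κ) (B : Set R) : Prop :=
  ∀ t ∈ T, ∃ p ≠ 0, B ⊆ (· * p) '' (χ ⁻¹' {t})

namespace IsFocused

variable {R κ : Type*} [NonAssocSemiring R] {χ : R → κ} {T : Set κ} {B B' : Set R}

theorem mono (h : IsFocused χ T B) (hB : B' ⊆ B) : IsFocused χ T B' :=
  fun t ht ↦ (h t ht).imp fun _ hp ↦ ⟨hp.1, hB.trans hp.2⟩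

protected theorem insert [Nontrivial R] (h : IsFocused χ T B) {t : κ} (ht : B ⊆ χ ⁻¹' {t}) :
    IsFocused χ (insert t T) B :=
  Set.forall_mem_insert.2 ⟨⟨1, one_ne_zero, fun b hb ↦ ⟨b, ht hb, mul_one b⟩⟩, h⟩

theorem image_nsmul [IsAddTorsionFree R] (h : IsFocused χ T B) {d : ℕ} (hd : d ≠ 0) :
    IsFocused χ T ((d • ·) '' B) := by
  intro t ht
  obtain ⟨p, hp, hB⟩ := h t ht
  refine ⟨d • p, smul_ne_zero hd hp, ?_⟩
  rintro _ ⟨b, hb, rfl⟩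
  obtain ⟨x, hx, rfl⟩ := hB hb
  exact ⟨x, hx, mul_smul_comm d x p⟩

end IsFocused

section Step

variable {R κ : Type*} [NonAssocSemiring R] [IsAddTorsionFree R] [IsRightCancelMulZero R]
  {χ : R → κ}

theorem exists_mono_add_mul_of_mem_image_mul {t : κ} {p b : R} {d : ℕ} (hd : d ≠ 0) (hp : p ≠ 0)
    (hb₀ : b ≠ 0) (hb : b ∈ (· * p) '' (χ ⁻¹' {t}))
    (hbd : b + d • (p * p) ∈ (· * p) '' (χ ⁻¹' {t})) (ht : χ (d • b) = t) :
    ∃ x y : R, x ≠ 0 ∧ y ≠ 0 ∧ χ (x + y) = χ x ∧ χ (x * y) = χ x := by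
  obtain ⟨x, hx, rfl⟩ := hb
  obtain ⟨z, hz, hzx⟩ := hbd
  have hz_eq : z = x + d • p := by
    refine mul_right_cancel₀ hp ?_
    rw [add_mul, smul_mul_assoc]
    exact hzx
  refine ⟨x, d • p, left_ne_zero_of_mul hb₀, smul_ne_zero hd hp, ?_, ?_⟩
  · rw [← hz_eq, hz, hx]
  · rw [mul_smul_comm, ht, hx]

theorem IsFocused.exists_mono_add_mul_or_insert [Nontrivial R] [Finite κ] {T : Set κ} {B : Set R}
    (h : IsFocused χ T B) (hB : IsPiecewiseSyndetic B) (hB₀ : 0 ∉ B)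
    (hR : ∀ d : ℕ, d ≠ 0 → IsSyndetic (Set.range fun x : R ↦ d • x)) :
    (∃ x y : R, x ≠ 0 ∧ y ≠ 0 ∧ χ (x + y) = χ x ∧ χ (x * y) = χ x) ∨
      ∃ t ∉ T, ∃ B', IsFocused χ (insert t T) B' ∧ IsPiecewiseSyndetic B' ∧ 0 ∉ B' := by
  choose p hp hBp using fun t : T ↦ h t t.2
  have hS : (Set.range fun t ↦ p t * p t).Finite := Set.finite_range _
  obtain ⟨d, hd, hD⟩ := hB.exists_nsmul_add_mem hS.toFinset
  set D := {b ∈ B | ∀ s ∈ hS.toFinset, b + d • s ∈ B}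
  have hDB : D ⊆ B := fun b hb ↦ hb.1
  obtain ⟨t, ht⟩ := (hD.image (f := nsmulAddMonoidHom d) (hR d hd.ne')).exists_inter_fiber χ
  by_cases htT : t ∈ T
  · obtain ⟨_, ⟨b, hb, rfl⟩, hbt⟩ := ht.nonempty
    have hbd : b + d • (p ⟨t, htT⟩ * p ⟨t, htT⟩) ∈ B := hb.2 _ (by simp)
    exact .inl <| exists_mono_add_mul_of_mem_image_mul hd.ne' (hp ⟨t, htT⟩)
      (ne_of_mem_of_not_mem hb.1 hB₀) (hBp _ hb.1) (hBp _ hbd) hbt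
  · refine .inr ⟨t, htT, _, .insert (.mono ((h.mono hDB).image_nsmul hd.ne')
      Set.inter_subset_left) Set.inter_subset_right, ht, ?_⟩
    rintro ⟨⟨b, hb, hb₀⟩, -⟩
    exact smul_ne_zero hd.ne' (ne_of_mem_of_not_mem hb.1 hB₀) hb₀

end Step

theorem stmt2_general {R κ : Type*} [NonAssocSemiring R] [Infinite R] [IsAddTorsionFree R]
    [IsRightCancelMulZero R] [Finite κ]
    (hR : ∀ d : ℕ, d ≠ 0 → IsSyndetic (Set.range fun x : R ↦ d • x)) (χ : R → κ) :
    ∃ x y : R, x ≠ 0 ∧ y ≠ 0 ∧ χ (x + y) = χ x ∧ χ (x * y) = χ x := by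
  suffices hfocus : ∀ (T : Set κ) (B : Set R), IsFocused χ T B → IsPiecewiseSyndetic B → 0 ∉ B →
      ∃ x y : R, x ≠ 0 ∧ y ≠ 0 ∧ χ (x + y) = χ x ∧ χ (x * y) = χ x from
    hfocus ∅ {0}ᶜ (fun _ ↦ False.elim) isPiecewiseSyndetic_compl_singleton_zero (by simp)
  intro T
  induction T using WellFoundedGT.induction with
  | _ T ih =>
    intro B hT hB hB₀
    obtain hxy | ⟨t, ht, B', hT', hB', hB₀'⟩ := hT.exists_mono_add_mul_or_insert hB hB₀ hR
    · exact hxy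
    · exact ih _ (Set.ssubset_insert ht) B' hT' hB' hB₀'

theorem stmt2 (n : ℕ) (χ : ℕ → Fin n) :
    ∃ x y : ℕ, 0 < x ∧ 0 < y ∧ χ (x + y) = χ x ∧ χ (x * y) = χ x := by
  simpa only [Nat.pos_iff_ne_zero] using
    stmt2_general (fun _ ↦ isSyndetic_range_nsmul_nat) χ
end
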